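/- arXiv:2304.00621 — 3 statements merged into one kernel-verified Lean document; each statement's English description precedes it below -/
import Mathlib

section
/- Let β=(1,2) and γ∈{γ_adj,γ_opp}. There exists a constant C_0>0, depending only on γ, such that for every ε>0 there exists A*≥1 with the following property: for all A_1≥A* (and A_2=10A_1), every (1,2)-cube Q=I×J and every x∈Q, |m(I(x,+,W_1))/ℓ(I) − C_0| ≤ ε, where m denotes one-dimensional Lebesgue measure; in particular the convergence of m(I(x,+,W_1))/ℓ(I) to C_0 as A_1→∞ is uniform in x and Q. -/
/-!
All times that occur are nonnegative, so only the branch `t ↦ (t, t²)` of `γ` matters, and the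
parabolic dilations, which preserve it, reduce everything to the unit square. Write the point as
`(a, b)`, the time along the fibre as `t = A + 3/2 + u`, and the remaining time to `P` as
`s = 10A + 3/2 + v`, with `u` and `v` bounded. The second coordinates can match only if
`2A (u + 10v) = O(1)`, that is `v = -u/10 + O(1/A)`, so the condition `a + u + v ∈ [0, 1]` on the
first coordinates becomes `a + 9u/10 ∈ [0, 1]` up to `O(1/A)`. This is an interval of length `10/9`
inside `|u| ≤ 3/2`, where membership in `Q̃` is automatic.
-/

open MeasureTheory Set

noncomputable section

/-- The parabola `γ_adj(t) = (t, t²)` (parts in adjacent quadrants). -/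
def gAdj (t : ℝ) : ℝ × ℝ := (t, t ^ 2)

/-- The parabola `γ_opp(t) = (t, sign(t)·t²)` (parts in opposite quadrants). -/
def gOpp (t : ℝ) : ℝ × ℝ := (t, Real.sign t * t ^ 2)

/-- The `(1,2)`-cube `Q = I × J` with `I = [x₀, x₀+L]`, `J = [y₀, y₀+L²]`,
so that `ℓ(J) = ℓ(I)²`. -/
def cubeQ (x0 y0 L : ℝ) : Set (ℝ × ℝ) :=
  Icc x0 (x0 + L) ×ˢ Icc y0 (y0 + L ^ 2)

/-- The auxiliary interval `I_A = ℓ(I)·[A, A+3]`. -/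
def intA (L A : ℝ) : Set ℝ := Icc (L * A) (L * (A + 3))

/-- `Q̃ = {x + γ(t) : x ∈ Q, t ∈ I_{A₁}}`. -/
def tilQ (γ : ℝ → ℝ × ℝ) (x0 y0 L A1 : ℝ) : Set (ℝ × ℝ) :=
  {w | ∃ x ∈ cubeQ x0 y0 L, ∃ t ∈ intA L A1, w = x + γ t}

/-- `P = V₁ + γ(c_{I_{A₂}})` with `V₁ = Q + γ(c_{I_{A₁}})` and `A₂ = 10·A₁`. -/
def setP (γ : ℝ → ℝ × ℝ) (x0 y0 L A1 : ℝ) : Set (ℝ × ℝ) :=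
  (fun x => x + γ (L * (A1 + 3/2)) + γ (L * (10 * A1 + 3/2))) '' cubeQ x0 y0 L

/-- `P̃ = {z - γ(t) : z ∈ P, t ∈ I_{A₂}}` with `A₂ = 10·A₁`. -/
def tilP (γ : ℝ → ℝ × ℝ) (x0 y0 L A1 : ℝ) : Set (ℝ × ℝ) :=
  {w | ∃ z ∈ setP γ x0 y0 L A1, ∃ t ∈ intA L (10 * A1), w = z - γ t}

/-- `W₁ = Q̃ ∩ P̃`. -/
def setW1 (γ : ℝ → ℝ × ℝ) (x0 y0 L A1 : ℝ) : Set (ℝ × ℝ) :=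
  tilQ γ x0 y0 L A1 ∩ tilP γ x0 y0 L A1

/-- `φ(a, −, B) = {a − γ(t) : t ∈ ℝ} ∩ B`. -/
def phiM (γ : ℝ → ℝ × ℝ) (a : ℝ × ℝ) (B : Set (ℝ × ℝ)) : Set (ℝ × ℝ) :=
  {w ∈ B | ∃ t : ℝ, w = a - γ t}

/-- `I(a, +, B) = {t ∈ ℝ : a + γ(t) ∈ B}`. -/
def IsetP (γ : ℝ → ℝ × ℝ) (a : ℝ × ℝ) (B : Set (ℝ × ℝ)) : Set ℝ :=
  {t : ℝ | a + γ t ∈ B}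

lemma mem_tilQ_iff {γ : ℝ → ℝ × ℝ} {x0 y0 L A : ℝ} {w : ℝ × ℝ} :
    w ∈ tilQ γ x0 y0 L A ↔ ∃ t ∈ intA L A, w - γ t ∈ cubeQ x0 y0 L := by
  constructor
  · rintro ⟨x, hx, t, ht, rfl⟩
    exact ⟨t, ht, by rwa [add_sub_cancel_right]⟩
  · rintro ⟨t, ht, hx⟩
    exact ⟨w - γ t, hx, t, ht, (sub_add_cancel _ _).symm⟩

lemma mem_tilP_iff {γ : ℝ → ℝ × ℝ} {x0 y0 L A : ℝ} {w : ℝ × ℝ} :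
    w ∈ tilP γ x0 y0 L A ↔ ∃ t ∈ intA L (10 * A),
      w + γ t - γ (L * (10 * A + 3 / 2)) - γ (L * (A + 3 / 2)) ∈ cubeQ x0 y0 L := by
  constructor
  · rintro ⟨_, ⟨x, hx, rfl⟩, t, ht, rfl⟩
    exact ⟨t, ht, by simpa only [sub_add_cancel, add_sub_cancel_right] using hx⟩
  · rintro ⟨t, ht, hx⟩
    exact ⟨w + γ t, ⟨_, hx, by simp only [sub_add_cancel]⟩, t, ht,
      (add_sub_cancel_right _ _).symm⟩

lemma eqOn_gOpp_gAdj : EqOn gOpp gAdj (Ici 0) := by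
  intro t ht
  rcases (mem_Ici.1 ht).eq_or_lt with rfl | ht
  · simp [gOpp, gAdj]
  · rw [gOpp, gAdj, Real.sign_of_pos ht, one_mul]

section Reduction

variable {γ : ℝ → ℝ × ℝ} {x0 y0 L A t : ℝ} {x : ℝ × ℝ}

lemma intA_subset_Ici (hL : 0 ≤ L) (hA : 0 ≤ A) : intA L A ⊆ Ici 0 :=
  fun _ ht => (mul_nonneg hL hA).trans ht.1

lemma setW1_congr_of_eqOn_Ici {γ' : ℝ → ℝ × ℝ} (h : EqOn γ γ' (Ici 0)) (hL : 0 ≤ L)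
    (hA : 0 ≤ A) : setW1 γ x0 y0 L A = setW1 γ' x0 y0 L A := by
  have h10A : 0 ≤ 10 * A := by positivity
  have hQ : tilQ γ x0 y0 L A = tilQ γ' x0 y0 L A := by
    ext w
    simp only [mem_tilQ_iff]
    exact exists_congr fun t => and_congr_right fun ht => by rw [h (intA_subset_Ici hL hA ht)]
  have hP : tilP γ x0 y0 L A = tilP γ' x0 y0 L A := by
    ext w
    simp only [mem_tilP_iff]
    refine exists_congr fun t => and_congr_right fun ht => ?_
    rw [h (intA_subset_Ici hL h10A ht), h (mem_Ici.2 (by positivity)),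
      h (mem_Ici.2 (by positivity))]
  rw [setW1, setW1, hQ, hP]

lemma nonneg_of_add_mem_tilQ (hneg : ∀ s < 0, (γ s).1 < 0) (hA : 1 ≤ A) (hL : 0 ≤ L)
    (hx : x ∈ cubeQ x0 y0 L) (h : x + γ t ∈ tilQ gAdj x0 y0 L A) : 0 ≤ t := by
  by_contra! ht
  obtain ⟨q, hq, s, hs, heq⟩ := h
  have hfst : x.1 + (γ t).1 = q.1 + s := congrArg Prod.fst heq
  have hLA : L ≤ L * A := le_mul_of_one_le_right hL hA
  linarith [hneg t ht, hx.1.2, hq.1.1, hs.1]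

lemma fibre_eq_fibre_gAdj (hpos : EqOn γ gAdj (Ici 0)) (hneg : ∀ s < 0, (γ s).1 < 0)
    (hA : 1 ≤ A) (hL : 0 ≤ L) (hx : x ∈ cubeQ x0 y0 L) :
    IsetP γ x (setW1 γ x0 y0 L A) = IsetP gAdj x (setW1 gAdj x0 y0 L A) := by
  rw [setW1_congr_of_eqOn_Ici hpos hL (zero_le_one.trans hA)]
  ext t
  constructor <;> intro ht
  · have ht0 := nonneg_of_add_mem_tilQ hneg hA hL hx ht.1
    rwa [IsetP, mem_ofPred_eq, ← hpos ht0]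
  · have ht0 := nonneg_of_add_mem_tilQ (γ := gAdj) (fun _ hs => hs) hA hL hx ht.1
    rwa [IsetP, mem_ofPred_eq, hpos ht0]

end Reduction

/-- The parabolic similarity carrying the unit square onto the cube `cubeQ x0 y0 L`. -/
def cubeChart (x0 y0 L : ℝ) (p : ℝ × ℝ) : ℝ × ℝ :=
  (x0 + L * p.1, y0 + L ^ 2 * p.2)

section Rescaling

variable {x0 y0 L A : ℝ}

lemma cubeChart_surjective (hL : L ≠ 0) : Function.Surjective (cubeChart x0 y0 L) := by
  intro x
  refine ⟨((x.1 - x0) / L, (x.2 - y0) / L ^ 2), ?_⟩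
  ext <;> simp only [cubeChart] <;> field_simp <;> ring

lemma cubeChart_add_gAdj (p : ℝ × ℝ) (t : ℝ) :
    cubeChart x0 y0 L p + gAdj (L * t) = cubeChart x0 y0 L (p + gAdj t) := by
  ext <;> simp only [cubeChart, gAdj, Prod.fst_add, Prod.snd_add] <;> ring

lemma cubeChart_sub_gAdj (p : ℝ × ℝ) (t : ℝ) :
    cubeChart x0 y0 L p - gAdj (L * t) = cubeChart x0 y0 L (p - gAdj t) := by
  rw [sub_eq_iff_eq_add, cubeChart_add_gAdj, sub_add_cancel]

lemma mem_unit_cubeQ_iff {p : ℝ × ℝ} :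
    p ∈ cubeQ 0 0 1 ↔ p.1 ∈ Icc (0 : ℝ) 1 ∧ p.2 ∈ Icc (0 : ℝ) 1 := by
  simp only [cubeQ, mem_prod, zero_add, one_pow]

lemma cubeChart_mem_cubeQ_iff (hL : 0 < L) {p : ℝ × ℝ} :
    cubeChart x0 y0 L p ∈ cubeQ x0 y0 L ↔ p ∈ cubeQ 0 0 1 := by
  simp only [cubeQ, cubeChart, mem_prod, mem_Icc, zero_add, one_pow, le_add_iff_nonneg_right,
    add_le_add_iff_left, mul_nonneg_iff_of_pos_left hL, mul_nonneg_iff_of_pos_left (pow_pos hL 2),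
    mul_le_iff_le_one_right hL, mul_le_iff_le_one_right (pow_pos hL 2)]

lemma intA_eq_image_Icc (hL : 0 < L) : intA L A = (L * ·) '' Icc A (A + 3) :=
  (image_mul_left_Icc' hL _ _).symm

/-- The fibre `I(p, +, W₁)` over the unit square for the branch `t ↦ (t, t²)`, with membership in
`Q̃` and `P̃` expressed by the times `s` at which one flows back to `Q` or forward to `P`. -/
def unitFibre (A : ℝ) (p : ℝ × ℝ) : Set ℝ :=
  {t | (∃ s ∈ Icc A (A + 3), p + gAdj t - gAdj s ∈ cubeQ 0 0 1) ∧
    ∃ s ∈ Icc (10 * A) (10 * A + 3),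
      p + gAdj t + gAdj s - gAdj (10 * A + 3 / 2) - gAdj (A + 3 / 2) ∈ cubeQ 0 0 1}

lemma preimage_fibre_eq_unitFibre (hL : 0 < L) (p : ℝ × ℝ) :
    (L * ·) ⁻¹' IsetP gAdj (cubeChart x0 y0 L p) (setW1 gAdj x0 y0 L A) = unitFibre A p := by
  ext t
  simp only [IsetP, unitFibre, setW1, mem_preimage, mem_ofPred_eq, mem_inter_iff, mem_tilQ_iff,
    mem_tilP_iff, intA_eq_image_Icc hL, exists_mem_image, cubeChart_add_gAdj, cubeChart_sub_gAdj,
    cubeChart_mem_cubeQ_iff hL]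

lemma volume_fibre_div_eq (hL : 0 < L) (p : ℝ × ℝ) :
    (volume (IsetP gAdj (cubeChart x0 y0 L p) (setW1 gAdj x0 y0 L A))).toReal / L =
      (volume (unitFibre A p)).toReal := by
  rw [← preimage_fibre_eq_unitFibre hL, Real.volume_preimage_mul_left hL.ne', ENNReal.toReal_mul,
    ENNReal.toReal_ofReal (abs_nonneg _), abs_of_pos (inv_pos.2 hL), div_eq_inv_mul]

end Rescaling

section Offsets

lemma abs_add_mul_le_sq_defect_div {A : ℝ} (hA : 0 < A) (c κ u v : ℝ) :
    |u + κ * v| ≤ (|(A + c + u) ^ 2 + (κ * A + c + v) ^ 2 - (κ * A + c) ^ 2 - (A + c) ^ 2|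
      + 2 * |c * (u + v)| + u ^ 2 + v ^ 2) / (2 * A) := by
  set e := (A + c + u) ^ 2 + (κ * A + c + v) ^ 2 - (κ * A + c) ^ 2 - (A + c) ^ 2 with he
  have hexpand : 2 * A * (u + κ * v) = e - 2 * (c * (u + v)) - u ^ 2 - v ^ 2 := by
    rw [he]; ring
  have hdiv : u + κ * v = (e - 2 * (c * (u + v)) - u ^ 2 - v ^ 2) / (2 * A) := by
    rw [← hexpand, mul_div_cancel_left₀ _ (by positivity)]
  rw [hdiv, abs_div, abs_of_pos (by positivity : 0 < 2 * A)]
  gcongr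
  rw [abs_le]
  constructor <;> linarith [neg_abs_le e, le_abs_self e, neg_abs_le (c * (u + v)),
    le_abs_self (c * (u + v)), sq_nonneg u, sq_nonneg v]

variable {A t s : ℝ}

lemma abs_offset_add_le (hA : 0 < A) (ht : |t - (A + 3 / 2)| ≤ 5 / 2)
    (hs : |s - (10 * A + 3 / 2)| ≤ 3 / 2)
    (hbal : |t ^ 2 + s ^ 2 - (10 * A + 3 / 2) ^ 2 - (A + 3 / 2) ^ 2| ≤ 1) :
    |(t - (A + 3 / 2)) + 10 * (s - (10 * A + 3 / 2))| ≤ 11 / A := by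
  have hest := abs_add_mul_le_sq_defect_div hA (3 / 2) 10 (t - (A + 3 / 2)) (s - (10 * A + 3 / 2))
  rw [add_sub_cancel, add_sub_cancel] at hest
  set u := t - (A + 3 / 2)
  set v := s - (10 * A + 3 / 2)
  have hsum : |3 / 2 * (u + v)| ≤ 6 := by
    rw [abs_le] at *
    constructor <;> linarith
  have hu : u ^ 2 ≤ (5 / 2) ^ 2 := sq_le_sq.2 (by rwa [abs_of_pos (by norm_num : (0 : ℝ) < 5 / 2)])
  have hv : v ^ 2 ≤ (3 / 2) ^ 2 := sq_le_sq.2 (by rwa [abs_of_pos (by norm_num : (0 : ℝ) < 3 / 2)])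
  calc |u + 10 * v| ≤ _ := hest
    _ ≤ 22 / (2 * A) := by gcongr; linarith
    _ = 11 / A := by field_simp; norm_num

lemma exists_sq_balance (hA : 1 ≤ A) (ht : t ∈ Icc A (A + 3)) :
    ∃ s ∈ Icc (10 * A) (10 * A + 3),
      t ^ 2 + s ^ 2 - (10 * A + 3 / 2) ^ 2 - (A + 3 / 2) ^ 2 = 0 := by
  have htA : A ^ 2 ≤ t ^ 2 := pow_le_pow_left₀ (by linarith) ht.1 2
  have htA3 : t ^ 2 ≤ (A + 3) ^ 2 := pow_le_pow_left₀ (by linarith [ht.1]) ht.2 2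
  have hlo : (10 * A) ^ 2 ≤ (A + 3 / 2) ^ 2 + (10 * A + 3 / 2) ^ 2 - t ^ 2 := by linarith
  have hhi : (A + 3 / 2) ^ 2 + (10 * A + 3 / 2) ^ 2 - t ^ 2 ≤ (10 * A + 3) ^ 2 := by linarith
  refine ⟨√((A + 3 / 2) ^ 2 + (10 * A + 3 / 2) ^ 2 - t ^ 2),
    ⟨Real.le_sqrt_of_sq_le hlo, Real.sqrt_le_iff.2 ⟨by linarith, hhi⟩⟩, ?_⟩
  rw [Real.sq_sqrt ((sq_nonneg _).trans hlo)]
  ring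

end Offsets

section UnitFibre

variable {A : ℝ} {p : ℝ × ℝ}

lemma unitFibre_subset_closedBall (hA : 0 < A) (hp : p ∈ cubeQ 0 0 1) :
    unitFibre A p ⊆
      Metric.closedBall (A + 3 / 2 + 10 / 9 * (1 / 2 - p.1)) (5 / 9 + 2 / A) := by
  rintro t ⟨⟨r, hr, hQ⟩, s, hs, hP⟩
  rw [mem_unit_cubeQ_iff] at hp hQ hP
  obtain ⟨⟨hp1, hp1'⟩, hp2, hp2'⟩ := hp
  obtain ⟨⟨hQ1, hQ1'⟩, -⟩ := hQ
  obtain ⟨⟨hP1, hP1'⟩, hP2, hP2'⟩ := hP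
  simp only [gAdj, Prod.fst_add, Prod.snd_add, Prod.fst_sub, Prod.snd_sub] at *
  have hoff := abs_offset_add_le (t := t) (s := s) hA
    (abs_le.2 ⟨by linarith [hr.1], by linarith [hr.2]⟩)
    (abs_le.2 ⟨by linarith [hs.1], by linarith [hs.2]⟩)
    (abs_le.2 ⟨by linarith, by linarith⟩)
  have hinv : 0 < 1 / A := by positivity
  rw [div_eq_mul_one_div 11, abs_le] at hoff
  rw [Metric.mem_closedBall, Real.dist_eq, div_eq_mul_one_div 2, abs_le]
  constructor <;> linarith [hoff.1, hoff.2]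

lemma closedBall_subset_unitFibre (hA : 1 ≤ A) (hp : p ∈ cubeQ 0 0 1) :
    Metric.closedBall (A + 3 / 2 + 10 / 9 * (1 / 2 - p.1)) (5 / 9 - 2 / A) ⊆
      unitFibre A p := by
  intro t ht
  have hinv : 0 < 1 / A := by positivity
  rw [Metric.mem_closedBall, Real.dist_eq, div_eq_mul_one_div 2, abs_le] at ht
  obtain ⟨⟨hp1, hp1'⟩, hp2⟩ := mem_unit_cubeQ_iff.1 hp
  have htA : t ∈ Icc A (A + 3) := ⟨by linarith [ht.1], by linarith [ht.2]⟩
  obtain ⟨s, hs, hbal⟩ := exists_sq_balance hA htA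
  have hoff := abs_offset_add_le (t := t) (s := s) (by positivity)
    (abs_le.2 ⟨by linarith [htA.1], by linarith [htA.2]⟩)
    (abs_le.2 ⟨by linarith [hs.1], by linarith [hs.2]⟩)
    (by rw [hbal, abs_zero]; exact zero_le_one)
  rw [div_eq_mul_one_div 11, abs_le] at hoff
  refine ⟨⟨t, htA, by rwa [add_sub_cancel_right]⟩, s, hs, mem_unit_cubeQ_iff.2 ⟨?_, ?_⟩⟩
  · simp only [gAdj, Prod.fst_add, Prod.fst_sub]
    constructor <;> linarith [hoff.1, hoff.2, ht.1, ht.2]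
  · simp only [gAdj, Prod.snd_add, Prod.snd_sub]
    convert hp2 using 1
    linear_combination hbal

end UnitFibre

lemma abs_volume_toReal_sub_le_of_closedBall_subset {S : Set ℝ} {c r δ : ℝ} (hrδ : 0 ≤ r + δ)
    (hinner : Metric.closedBall c (r - δ) ⊆ S) (houter : S ⊆ Metric.closedBall c (r + δ)) :
    |(volume S).toReal - 2 * r| ≤ 2 * δ := by
  have hlower := measure_mono (μ := volume) hinner
  have hupper := measure_mono (μ := volume) houter
  rw [Real.volume_closedBall] at hlower hupper
  have hfin : volume S ≠ ⊤ := ne_top_of_le_ne_top ENNReal.ofReal_ne_top hupper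
  have hupper' := ENNReal.toReal_le_of_le_ofReal (by positivity) hupper
  have hlower' := (ENNReal.ofReal_le_iff_le_toReal hfin).1 hlower
  rw [abs_le]
  constructor <;> linarith

lemma abs_volume_unitFibre_sub_le {A : ℝ} {p : ℝ × ℝ} (hA : 1 ≤ A) (hp : p ∈ cubeQ 0 0 1) :
    |(volume (unitFibre A p)).toReal - 10 / 9| ≤ 4 / A := by
  have hA0 : 0 < A := by positivity
  have h := abs_volume_toReal_sub_le_of_closedBall_subset (by positivity)
    (closedBall_subset_unitFibre hA hp) (unitFibre_subset_closedBall hA0 hp)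
  convert h using 1
  · norm_num
  · ring

theorem fibre_length_limit_general {γ : ℝ → ℝ × ℝ} (hpos : EqOn γ gAdj (Ici 0))
    (hneg : ∀ t < 0, (γ t).1 < 0) {A1 x0 y0 L : ℝ} (hA : 1 ≤ A1) (hL : 0 < L) {x : ℝ × ℝ}
    (hx : x ∈ cubeQ x0 y0 L) :
    |(volume (IsetP γ x (setW1 γ x0 y0 L A1))).toReal / L - 10 / 9| ≤ 4 / A1 := by
  obtain ⟨p, rfl⟩ := cubeChart_surjective (x0 := x0) (y0 := y0) hL.ne' x
  rw [fibre_eq_fibre_gAdj hpos hneg hA hL.le hx, volume_fibre_div_eq hL]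
  exact abs_volume_unitFibre_sub_le hA ((cubeChart_mem_cubeQ_iff hL).1 hx)

/-- **Uniform limit of the normalised fibre length.** For `γ ∈ {γ_adj, γ_opp}`
there is an absolute constant `C₀ > 0` such that `m(I(x,+,W₁))/ℓ(I) → C₀` as
`A₁ → ∞`, uniformly in `x ∈ Q` and in the `(1,2)`-cube `Q`. -/
theorem fibre_length_limit (γ : ℝ → ℝ × ℝ) (hγ : γ = gAdj ∨ γ = gOpp) :
    ∃ C0 : ℝ, 0 < C0 ∧ ∀ ε : ℝ, 0 < ε →
      ∃ Astar : ℝ, 1 ≤ Astar ∧ ∀ A1 : ℝ, Astar ≤ A1 →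
        ∀ x0 y0 L : ℝ, 0 < L →
          ∀ x ∈ cubeQ x0 y0 L,
            |(volume (IsetP γ x (setW1 γ x0 y0 L A1))).toReal / L - C0| ≤ ε := by
  have hpos : EqOn γ gAdj (Ici 0) := by
    rcases hγ with rfl | rfl
    exacts [eqOn_refl _ _, eqOn_gOpp_gAdj]
  have hneg : ∀ t < 0, (γ t).1 < 0 := by
    rcases hγ with rfl | rfl <;> exact fun _ ht => ht
  refine ⟨10 / 9, by norm_num, fun ε hε => ⟨max 1 (4 / ε), le_max_left _ _, ?_⟩⟩
  intro A1 hA x0 y0 L hL x hx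
  obtain ⟨hA1, hAε⟩ := max_le_iff.1 hA
  exact (fibre_length_limit_general hpos hneg hA1 hL hx).trans
    ((div_le_comm₀ hε (by positivity)).1 hAε)

end
end

section
/- Let β=(1,2) and γ∈{γ_adj,γ_opp}. There exist constants 0<c<C and A*≥1 such that for all A_1≥A* (and A_2=10A_1) and every (1,2)-cube Q=I×J the following hold, with m one-dimensional Lebesgue measure: (a) for every z∈P^c and every y∈φ(z,−,W_1), c·ℓ(I)/A_1 ≤ m(I(y,+,P)) ≤ C·ℓ(I)/A_1; (b) for every r∈[1,∞), every z∈Δ_r^{lt}∪Δ_r^{rb} and every y∈φ(z,−,W_1), c·2^{−r}·ℓ(I)/A_1 ≤ m(I(y,+,P)) ≤ C·2^{−r}·ℓ(I)/A_1. -/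
/-!
The first coordinate of `γ(t)` is `t`, so for `y ∈ Q̃` every `t` with `y + γ(t) ∈ P` lies in
`ℓ(I)·[10A₁ - 1, 10A₁ + 4]`, where both curves are the parabola `(t, t²)` and the difference
quotients of `t²` lie between `ℓ(I)·A₁` and `24·ℓ(I)·A₁`. The fibre `I(y,+,P)` of a point
`y = z - γ(t₀)` is therefore squeezed between two intervals around `t₀`: the sets of parameters for
which the lines of slope `24·ℓ(I)·A₁` and `ℓ(I)·A₁` through `z` stay in `P`.

Let `h = (2δℓ(I)/A₁, δℓ(I)²)` be the size of the corner boxes, with `δ = 2^{-r}`. For a point of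
`P^c` (with `δ = 1/2`) or of `Δ_r`, the translate of the box `[0, h]` to its lower left or to its
upper right is contained in `P`, and the steep line needs the time `δℓ(I)/(24A₁)` to cross it. For
the upper bounds, a line of slope `ℓ(I)·A₁` climbs the height `ℓ(I)²` of `P` in time `ℓ(I)/A₁`,
and inside a corner box it leaves `P` through the left or right side within `2δℓ(I)/A₁` in one
direction of time and through the bottom or top side within `δℓ(I)/A₁` in the other.
-/

open MeasureTheory Set

noncomputable section

/-- The translation vector `γ(c_{I_{A₁}}) + γ(c_{I_{A₂}})` carrying `Q` onto `P`. -/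
def vshift (γ : ℝ → ℝ × ℝ) (L A1 : ℝ) : ℝ × ℝ :=
  γ (L * (A1 + 3/2)) + γ (L * (10 * A1 + 3/2))

/-- The left-top corner box `P^{lt}_r = v_lt + R_{1,−1}(r)`, where `v_lt` is the
left-top vertex of `P` and `R_{1,−1}(r) = [0, 2^{-(r-1)}ℓ(I)/A₁] × [-2^{-r}ℓ(I)², 0]`. -/
def Plt (γ : ℝ → ℝ × ℝ) (x0 y0 L A1 r : ℝ) : Set (ℝ × ℝ) :=
  Icc (x0 + (vshift γ L A1).1) (x0 + (vshift γ L A1).1 + (2:ℝ) ^ (-(r - 1)) * L / A1) ×ˢ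
    Icc (y0 + L ^ 2 + (vshift γ L A1).2 - (2:ℝ) ^ (-r) * L ^ 2)
      (y0 + L ^ 2 + (vshift γ L A1).2)

/-- The right-bottom corner box `P^{rb}_r = v_rb + R_{−1,1}(r)`, where `v_rb` is the
right-bottom vertex of `P`. -/
def Prb (γ : ℝ → ℝ × ℝ) (x0 y0 L A1 r : ℝ) : Set (ℝ × ℝ) :=
  Icc (x0 + L + (vshift γ L A1).1 - (2:ℝ) ^ (-(r - 1)) * L / A1)
      (x0 + L + (vshift γ L A1).1) ×ˢ
    Icc (y0 + (vshift γ L A1).2) (y0 + (vshift γ L A1).2 + (2:ℝ) ^ (-r) * L ^ 2)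

/-- `Δ_r(P^{lt}_r) = closure(∂P^{lt}_r ∖ ∂P)`. -/
def DeltaLt (γ : ℝ → ℝ × ℝ) (x0 y0 L A1 r : ℝ) : Set (ℝ × ℝ) :=
  closure (frontier (Plt γ x0 y0 L A1 r) \ frontier (setP γ x0 y0 L A1))

/-- `Δ_r(P^{rb}_r) = closure(∂P^{rb}_r ∖ ∂P)`. -/
def DeltaRb (γ : ℝ → ℝ × ℝ) (x0 y0 L A1 r : ℝ) : Set (ℝ × ℝ) :=
  closure (frontier (Prb γ x0 y0 L A1 r) \ frontier (setP γ x0 y0 L A1))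

/-- The central part `P^c = P ∖ (P^{lt}_1 ∪ P^{rb}_1)`. -/
def Pcore (γ : ℝ → ℝ × ℝ) (x0 y0 L A1 : ℝ) : Set (ℝ × ℝ) :=
  setP γ x0 y0 L A1 \ (Plt γ x0 y0 L A1 1 ∪ Prb γ x0 y0 L A1 1)

section CornerBoxes

/-- The corner box of size `h` at the left-top vertex of the rectangle `Icc p q`. -/
def leftTopBox (p q h : ℝ × ℝ) : Set (ℝ × ℝ) :=
  Icc p.1 (p.1 + h.1) ×ˢ Icc (q.2 - h.2) q.2

/-- The corner box of size `h` at the right-bottom vertex of the rectangle `Icc p q`. -/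
def rightBottomBox (p q h : ℝ × ℝ) : Set (ℝ × ℝ) :=
  Icc (q.1 - h.1) q.1 ×ˢ Icc p.2 (p.2 + h.2)

/-- The rectangle `Icc p q` contains the translate of the box `[0, h.1] × [0, h.2]` whose right-top
or the one whose left-bottom vertex is `z`, provided `z ∈ Icc p q` and `0 ≤ h`. -/
def HasRoom (p q h z : ℝ × ℝ) : Prop := h ≤ z - p ∨ h ≤ q - z

variable {p q h z : ℝ × ℝ}

lemma closure_frontier_diff_frontier_subset {X : Type*} [TopologicalSpace X] {S T U : Set X}
    (hS : IsClosed S) (hU : IsOpen U) (hST : S ⊆ T) (hTU : T ∩ U ⊆ S) :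
    closure (frontier S \ frontier T) ⊆ S \ U := by
  refine closure_minimal (fun x ⟨hxS, hxT⟩ => ?_) (hS.sdiff hU)
  have hx : x ∈ S := hS.frontier_subset hxS
  refine ⟨hx, fun hxU => (mem_interior_iff_notMem_frontier hx).1 ?_ hxS⟩
  refine interior_mono hTU ?_
  rw [interior_inter, hU.interior_eq]
  exact ⟨(mem_interior_iff_notMem_frontier (hST hx)).2 hxT, hxU⟩

lemma leftTopBox_subset_Icc (hh : h + h ≤ q - p) : leftTopBox p q h ⊆ Icc p q := by
  rintro z ⟨⟨hz₁, hz₂⟩, hz₃, hz₄⟩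
  have h₁ : h.1 + h.1 ≤ q.1 - p.1 := hh.1
  have h₂ : h.2 + h.2 ≤ q.2 - p.2 := hh.2
  exact ⟨⟨hz₁, by linarith⟩, by linarith, hz₄⟩

lemma rightBottomBox_subset_Icc (hh : h + h ≤ q - p) : rightBottomBox p q h ⊆ Icc p q := by
  rintro z ⟨⟨hz₁, hz₂⟩, hz₃, hz₄⟩
  have h₁ : h.1 + h.1 ≤ q.1 - p.1 := hh.1
  have h₂ : h.2 + h.2 ≤ q.2 - p.2 := hh.2
  exact ⟨⟨by linarith, hz₃⟩, hz₂, by linarith⟩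

lemma hasRoom_of_mem_leftTopBox_diff (hh : h + h ≤ q - p)
    (hz : z ∈ leftTopBox p q h \ Iio (p.1 + h.1) ×ˢ Ioi (q.2 - h.2)) : HasRoom p q h z := by
  obtain ⟨⟨-, hz₂, -⟩, hz_notMem⟩ := hz
  have h₁ : h.1 + h.1 ≤ q.1 - p.1 := hh.1
  have h₂ : h.2 + h.2 ≤ q.2 - p.2 := hh.2
  by_cases hleft : z.1 < p.1 + h.1
  · have hbottom : z.2 ≤ q.2 - h.2 := not_lt.1 fun hz' => hz_notMem ⟨hleft, hz'⟩
    exact .inr (by constructor <;> simp only [Prod.fst_sub, Prod.snd_sub] <;> linarith)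
  · exact .inl (by constructor <;> simp only [Prod.fst_sub, Prod.snd_sub] <;> linarith)

lemma hasRoom_of_mem_rightBottomBox_diff (hh : h + h ≤ q - p)
    (hz : z ∈ rightBottomBox p q h \ Ioi (q.1 - h.1) ×ˢ Iio (p.2 + h.2)) : HasRoom p q h z := by
  obtain ⟨⟨-, -, hz₂⟩, hz_notMem⟩ := hz
  have h₁ : h.1 + h.1 ≤ q.1 - p.1 := hh.1
  have h₂ : h.2 + h.2 ≤ q.2 - p.2 := hh.2
  by_cases hright : q.1 - h.1 < z.1
  · have htop : p.2 + h.2 ≤ z.2 := not_lt.1 fun hz' => hz_notMem ⟨hright, hz'⟩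
    exact .inl (by constructor <;> simp only [Prod.fst_sub, Prod.snd_sub] <;> linarith)
  · exact .inr (by constructor <;> simp only [Prod.fst_sub, Prod.snd_sub] <;> linarith)

lemma closure_frontier_leftTopBox_diff_subset (hh : h + h ≤ q - p) :
    closure (frontier (leftTopBox p q h) \ frontier (Icc p q)) ⊆
      {z ∈ leftTopBox p q h | HasRoom p q h z} := fun z hz => by
  have hz' : z ∈ leftTopBox p q h \ Iio (p.1 + h.1) ×ˢ Ioi (q.2 - h.2) :=
    closure_frontier_diff_frontier_subset (isClosed_Icc.prod isClosed_Icc)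
      (isOpen_Iio.prod isOpen_Ioi) (leftTopBox_subset_Icc hh)
      (fun _ ⟨hw, hw'⟩ => ⟨⟨hw.1.1, hw'.1.le⟩, hw'.2.le, hw.2.2⟩) hz
  exact ⟨hz'.1, hasRoom_of_mem_leftTopBox_diff hh hz'⟩

lemma closure_frontier_rightBottomBox_diff_subset (hh : h + h ≤ q - p) :
    closure (frontier (rightBottomBox p q h) \ frontier (Icc p q)) ⊆
      {z ∈ rightBottomBox p q h | HasRoom p q h z} := fun z hz => by
  have hz' : z ∈ rightBottomBox p q h \ Ioi (q.1 - h.1) ×ˢ Iio (p.2 + h.2) :=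
    closure_frontier_diff_frontier_subset (isClosed_Icc.prod isClosed_Icc)
      (isOpen_Ioi.prod isOpen_Iio) (rightBottomBox_subset_Icc hh)
      (fun _ ⟨hw, hw'⟩ => ⟨⟨hw'.1.le, hw.2.1⟩, hw.1.2, hw'.2.le⟩) hz
  exact ⟨hz'.1, hasRoom_of_mem_rightBottomBox_diff hh hz'⟩

lemma hasRoom_of_notMem_boxes (hh : h.2 + h.2 = q.2 - p.2)
    (hz : z ∈ Icc p q \ (leftTopBox p q h ∪ rightBottomBox p q h)) :
    HasRoom p q h z := by
  obtain ⟨⟨hzp, hzq⟩, hz_notMem⟩ := hz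
  rw [mem_union, not_or] at hz_notMem
  rcases le_total (q.2 - h.2) z.2 with hupper | hlower
  · have hz₁ : p.1 + h.1 < z.1 := not_le.1 fun hz' => hz_notMem.1 ⟨⟨hzp.1, hz'⟩, hupper, hzq.2⟩
    exact .inl (by constructor <;> simp only [Prod.fst_sub, Prod.snd_sub] <;> linarith)
  · have hz₁ : z.1 < q.1 - h.1 :=
      not_le.1 fun hz' => hz_notMem.2 ⟨⟨hz', hzq.1⟩, hzp.2, by linarith⟩
    exact .inr (by constructor <;> simp only [Prod.fst_sub, Prod.snd_sub] <;> linarith)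

end CornerBoxes

section Reach

/-- The time a line of slope `k` takes to cross the box `[0, h.1] × [0, h.2]` from its left-bottom
vertex. -/
def reach (k : ℝ) (h : ℝ × ℝ) : ℝ := min h.1 (h.2 / k)

variable {k r : ℝ} {p q h z : ℝ × ℝ}

lemma reach_mono (hk : 0 ≤ k) : Monotone (reach k) := fun _ _ hab =>
  min_le_min hab.1 (div_le_div_of_nonneg_right hab.2 hk)

lemma reach_nonneg (hk : 0 ≤ k) (hh : 0 ≤ h) : 0 ≤ reach k h :=
  le_min hh.1 (div_nonneg hh.2 hk)

lemma le_reach_iff (hk : 0 < k) : r ≤ reach k h ↔ r ≤ h.1 ∧ k * r ≤ h.2 := by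
  rw [reach, le_min_iff, le_div_iff₀ hk, mul_comm]

lemma reach_le_reach_add_reach (hk : 0 ≤ k) (hz : z ∈ Icc p q) (hh : HasRoom p q h z) :
    reach k h ≤ reach k (z - p) + reach k (q - z) := by
  rcases hh with hh | hh
  · exact le_add_of_le_of_nonneg (reach_mono hk hh) (reach_nonneg hk (sub_nonneg.2 hz.2))
  · exact le_add_of_nonneg_of_le (reach_nonneg hk (sub_nonneg.2 hz.1)) (reach_mono hk hh)

lemma reach_add_reach_le_height_div :
    reach k (z - p) + reach k (q - z) ≤ (q.2 - p.2) / k :=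
  calc reach k (z - p) + reach k (q - z) ≤ (z.2 - p.2) / k + (q.2 - z.2) / k :=
        add_le_add (min_le_right _ _) (min_le_right _ _)
    _ = (q.2 - p.2) / k := by ring

lemma reach_add_reach_le_of_mem_boxes (hk : 0 ≤ k)
    (hz : z ∈ leftTopBox p q h ∪ rightBottomBox p q h) :
    reach k (z - p) + reach k (q - z) ≤ h.1 + h.2 / k := by
  rcases hz with hz | hz
  · exact add_le_add ((min_le_left _ _).trans (sub_le_iff_le_add'.2 hz.1.2))
      ((min_le_right _ _).trans (div_le_div_of_nonneg_right (sub_le_comm.1 hz.2.1) hk))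
  · rw [add_comm]
    exact add_le_add ((min_le_left _ _).trans (sub_le_comm.1 hz.1.1))
      ((min_le_right _ _).trans (div_le_div_of_nonneg_right (sub_le_iff_le_add'.2 hz.2.2) hk))

end Reach

section Slopes

/-- The difference quotients of `g` on `s` lie in `[m, M]`; stated without division. -/
def SlopesIn (g : ℝ → ℝ) (s : Set ℝ) (m M : ℝ) : Prop :=
  ∀ x ∈ s, ∀ y ∈ s, x ≤ y → g y - g x ∈ Icc (m * (y - x)) (M * (y - x))

variable {γ : ℝ → ℝ × ℝ} {g : ℝ → ℝ} {s s' : Set ℝ} {m m' M M' : ℝ} {h : ℝ × ℝ} {t u : ℝ}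

lemma SlopesIn.mono (hg : SlopesIn g s m M) (hs : s' ⊆ s) (hm : m' ≤ m) (hM : M ≤ M') :
    SlopesIn g s' m' M' := fun x hx y hy hxy =>
  Icc_subset_Icc (mul_le_mul_of_nonneg_right hm (sub_nonneg.2 hxy))
    (mul_le_mul_of_nonneg_right hM (sub_nonneg.2 hxy)) (hg x (hs hx) y (hs hy) hxy)

lemma SlopesIn.congr {f : ℝ → ℝ} (hg : SlopesIn g s m M) (hfg : EqOn f g s) :
    SlopesIn f s m M := fun x hx y hy hxy => by
  rw [hfg hx, hfg hy]
  exact hg x hx y hy hxy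

lemma slopesIn_sq (a b : ℝ) : SlopesIn (fun t => t ^ 2) (Icc a b) (2 * a) (2 * b) := by
  intro x hx y hy hxy
  rw [show y ^ 2 - x ^ 2 = (x + y) * (y - x) by ring]
  exact ⟨mul_le_mul_of_nonneg_right (by linarith [hx.1, hy.1]) (sub_nonneg.2 hxy),
    mul_le_mul_of_nonneg_right (by linarith [hx.2, hy.2]) (sub_nonneg.2 hxy)⟩

lemma SlopesIn.curve_le (hg : SlopesIn (fun t => (γ t).2) s m M) (hfst : ∀ t, (γ t).1 = t)
    (hm : 0 ≤ m) (ht : t ∈ s) (hu : u ∈ s) (htu : t ≤ u) : γ t ≤ γ u :=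
  ⟨by rwa [hfst, hfst],
    sub_nonneg.1 ((mul_nonneg hm (sub_nonneg.2 htu)).trans (hg t ht u hu htu).1)⟩

lemma SlopesIn.sub_le_reach (hg : SlopesIn (fun t => (γ t).2) s m M) (hfst : ∀ t, (γ t).1 = t)
    (hm : 0 < m) (ht : t ∈ s) (hu : u ∈ s) (htu : t ≤ u) : u - t ≤ reach m (γ u - γ t) := by
  refine (le_reach_iff hm).2 ⟨?_, (hg t ht u hu htu).1⟩
  rw [Prod.fst_sub, hfst, hfst]

lemma SlopesIn.curve_sub_le (hg : SlopesIn (fun t => (γ t).2) s m M) (hfst : ∀ t, (γ t).1 = t)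
    (hM : 0 < M) (ht : t ∈ s) (hu : u ∈ s) (htu : t ≤ u) (hh : u - t ≤ reach M h) :
    γ u - γ t ≤ h := by
  obtain ⟨h₁, h₂⟩ := (le_reach_iff hM).1 hh
  refine ⟨?_, (hg t ht u hu htu).2.trans h₂⟩
  rwa [Prod.fst_sub, hfst, hfst]

end Slopes

section Fibre

variable {γ : ℝ → ℝ × ℝ} {p q y z : ℝ × ℝ} {m M t₀ : ℝ} {W : Set (ℝ × ℝ)}

lemma Icc_reach_subset_IsetP (hfst : ∀ t, (γ t).1 = t)
    (hg : SlopesIn (fun t => (γ t).2) {t | y.1 + t ∈ Icc p.1 q.1} m M) (hm : 0 ≤ m) (hM : 0 < M)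
    (ht₀ : y + γ t₀ ∈ Icc p q) :
    Icc (t₀ - reach M (y + γ t₀ - p)) (t₀ + reach M (q - (y + γ t₀))) ⊆ IsetP γ y (Icc p q) := by
  rintro t ⟨ht, ht'⟩
  have hbefore : t₀ - t ≤ reach M (y + γ t₀ - p) := sub_le_comm.1 ht
  have hafter : t - t₀ ≤ reach M (q - (y + γ t₀)) := sub_le_iff_le_add'.2 ht'
  have hp : y.1 + t₀ - p.1 = (y + γ t₀ - p).1 := by simp [hfst]
  have hq : q.1 - (y.1 + t₀) = (q - (y + γ t₀)).1 := by simp [hfst]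
  have hs₀ : t₀ ∈ {t | y.1 + t ∈ Icc p.1 q.1} := by
    simpa [hfst] using And.intro ht₀.1.1 ht₀.2.1
  have hs : t ∈ {t | y.1 + t ∈ Icc p.1 q.1} :=
    ⟨by linarith [((le_reach_iff hM).1 hbefore).1], by linarith [((le_reach_iff hM).1 hafter).1]⟩
  rcases le_total t t₀ with htt₀ | htt₀
  · have hback := hg.curve_sub_le hfst hM hs hs₀ htt₀ hbefore
    refine ⟨?_, (add_le_add_right (hg.curve_le hfst hm hs hs₀ htt₀) y).trans ht₀.2⟩
    calc p = y + γ t₀ - (y + γ t₀ - p) := by abel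
      _ ≤ y + γ t₀ - (γ t₀ - γ t) := sub_le_sub_left hback _
      _ = y + γ t := by abel
  · have hforth := hg.curve_sub_le hfst hM hs₀ hs htt₀ hafter
    refine ⟨ht₀.1.trans (add_le_add_right (hg.curve_le hfst hm hs₀ hs htt₀) y), ?_⟩
    calc y + γ t = y + γ t₀ + (γ t - γ t₀) := by abel
      _ ≤ y + γ t₀ + (q - (y + γ t₀)) := add_le_add_right hforth _
      _ = q := by abel

lemma IsetP_subset_Icc_reach (hfst : ∀ t, (γ t).1 = t)
    (hg : SlopesIn (fun t => (γ t).2) {t | y.1 + t ∈ Icc p.1 q.1} m M) (hm : 0 < m)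
    (ht₀ : y + γ t₀ ∈ Icc p q) :
    IsetP γ y (Icc p q) ⊆
      Icc (t₀ - reach m (y + γ t₀ - p)) (t₀ + reach m (q - (y + γ t₀))) := by
  have hwindow : ∀ t, y + γ t ∈ Icc p q → t ∈ {t | y.1 + t ∈ Icc p.1 q.1} := fun t ht => by
    simpa [hfst] using And.intro ht.1.1 ht.2.1
  intro t (ht : y + γ t ∈ Icc p q)
  have hp₀ := reach_nonneg hm.le (sub_nonneg.2 ht₀.1)
  have hq₀ := reach_nonneg hm.le (sub_nonneg.2 ht₀.2)
  rcases le_total t t₀ with htt₀ | htt₀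
  · have hback : t₀ - t ≤ reach m (y + γ t₀ - p) :=
      calc t₀ - t ≤ reach m (γ t₀ - γ t) :=
            hg.sub_le_reach hfst hm (hwindow t ht) (hwindow t₀ ht₀) htt₀
        _ = reach m (y + γ t₀ - (y + γ t)) := by rw [add_sub_add_left_eq_sub]
        _ ≤ reach m (y + γ t₀ - p) := reach_mono hm.le (sub_le_sub_left ht.1 _)
    exact ⟨by linarith, by linarith⟩
  · have hforth : t - t₀ ≤ reach m (q - (y + γ t₀)) :=
      calc t - t₀ ≤ reach m (γ t - γ t₀) :=
            hg.sub_le_reach hfst hm (hwindow t₀ ht₀) (hwindow t ht) htt₀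
        _ = reach m (y + γ t - (y + γ t₀)) := by rw [add_sub_add_left_eq_sub]
        _ ≤ reach m (q - (y + γ t₀)) := reach_mono hm.le (sub_le_sub_right ht.2 _)
    exact ⟨by linarith, by linarith⟩

lemma exists_eq_add_of_mem_phiM (hy : y ∈ phiM γ z W) : ∃ t₀, z = y + γ t₀ :=
  hy.2.imp fun _ ht₀ => (sub_eq_iff_eq_add.1 ht₀.symm)

lemma volume_Icc_sub_add (t a b : ℝ) :
    volume (Icc (t - a) (t + b)) = ENNReal.ofReal (a + b) := by
  rw [Real.volume_Icc]
  congr 1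
  ring

lemma ofReal_reach_add_reach_le_volume_IsetP (hfst : ∀ t, (γ t).1 = t)
    (hg : SlopesIn (fun t => (γ t).2) {t | y.1 + t ∈ Icc p.1 q.1} m M) (hm : 0 ≤ m) (hM : 0 < M)
    (hz : z ∈ Icc p q) (hy : y ∈ phiM γ z W) :
    ENNReal.ofReal (reach M (z - p) + reach M (q - z)) ≤ volume (IsetP γ y (Icc p q)) := by
  obtain ⟨t₀, rfl⟩ := exists_eq_add_of_mem_phiM hy
  rw [← volume_Icc_sub_add t₀]
  exact measure_mono (Icc_reach_subset_IsetP hfst hg hm hM hz)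

lemma volume_IsetP_le_ofReal_reach_add_reach (hfst : ∀ t, (γ t).1 = t)
    (hg : SlopesIn (fun t => (γ t).2) {t | y.1 + t ∈ Icc p.1 q.1} m M) (hm : 0 < m)
    (hz : z ∈ Icc p q) (hy : y ∈ phiM γ z W) :
    volume (IsetP γ y (Icc p q)) ≤ ENNReal.ofReal (reach m (z - p) + reach m (q - z)) := by
  obtain ⟨t₀, rfl⟩ := exists_eq_add_of_mem_phiM hy
  rw [← volume_Icc_sub_add t₀]
  exact measure_mono (IsetP_subset_Icc_reach hfst hg hm hz)

end Fibre

section Curves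

/-- The left-bottom vertex of `P`. -/
def leftBottomP (γ : ℝ → ℝ × ℝ) (x0 y0 L A1 : ℝ) : ℝ × ℝ := (x0, y0) + vshift γ L A1

/-- The right-top vertex of `P`. -/
def rightTopP (γ : ℝ → ℝ × ℝ) (x0 y0 L A1 : ℝ) : ℝ × ℝ :=
  (x0 + L, y0 + L ^ 2) + vshift γ L A1

/-- The common size of the corner boxes `P^{lt}_r` and `P^{rb}_r`, with `δ` in place of `2^{-r}`. -/
def cornerSize (L A δ : ℝ) : ℝ × ℝ := (2 * δ * L / A, δ * L ^ 2)

variable {γ : ℝ → ℝ × ℝ} {x0 y0 L A1 : ℝ} {y : ℝ × ℝ}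

lemma curve_fst (hγ : γ = gAdj ∨ γ = gOpp) (t : ℝ) : (γ t).1 = t := by
  rcases hγ with rfl | rfl <;> rfl

lemma curve_snd_of_pos (hγ : γ = gAdj ∨ γ = gOpp) {t : ℝ} (ht : 0 < t) : (γ t).2 = t ^ 2 := by
  rcases hγ with rfl | rfl
  · rfl
  · simp [gOpp, Real.sign_of_pos ht]

lemma slopesIn_curve (hγ : γ = gAdj ∨ γ = gOpp) {a : ℝ} (ha : 0 < a) (b : ℝ) :
    SlopesIn (fun t => (γ t).2) (Icc a b) (2 * a) (2 * b) :=
  (slopesIn_sq a b).congr fun _ ht => curve_snd_of_pos hγ (ha.trans_le ht.1)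

lemma setP_eq_Icc (γ : ℝ → ℝ × ℝ) (x0 y0 L A1 : ℝ) :
    setP γ x0 y0 L A1 = Icc (leftBottomP γ x0 y0 L A1) (rightTopP γ x0 y0 L A1) := by
  simp only [setP, cubeQ, Icc_prod_Icc, add_assoc, image_add_const_Icc, leftBottomP, rightTopP,
    vshift]

lemma rightTopP_sub_leftBottomP (γ : ℝ → ℝ × ℝ) (x0 y0 L A1 : ℝ) :
    rightTopP γ x0 y0 L A1 - leftBottomP γ x0 y0 L A1 = (L, L ^ 2) := by
  simp [rightTopP, leftBottomP]

lemma cornerSize_two_rpow (L A r : ℝ) :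
    cornerSize L A ((2 : ℝ) ^ (-r)) = ((2 : ℝ) ^ (-(r - 1)) * L / A, (2 : ℝ) ^ (-r) * L ^ 2) := by
  rw [cornerSize, show -(r - 1) = -r + 1 by ring, Real.rpow_add_one two_ne_zero, mul_comm 2]

lemma Plt_eq_leftTopBox (γ : ℝ → ℝ × ℝ) (x0 y0 L A1 r : ℝ) :
    Plt γ x0 y0 L A1 r = leftTopBox (leftBottomP γ x0 y0 L A1) (rightTopP γ x0 y0 L A1)
      (cornerSize L A1 ((2 : ℝ) ^ (-r))) := by
  simp only [Plt, leftTopBox, cornerSize_two_rpow, leftBottomP, rightTopP, Prod.fst_add,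
    Prod.snd_add]

lemma Prb_eq_rightBottomBox (γ : ℝ → ℝ × ℝ) (x0 y0 L A1 r : ℝ) :
    Prb γ x0 y0 L A1 r = rightBottomBox (leftBottomP γ x0 y0 L A1) (rightTopP γ x0 y0 L A1)
      (cornerSize L A1 ((2 : ℝ) ^ (-r))) := by
  simp only [Prb, rightBottomBox, cornerSize_two_rpow, leftBottomP, rightTopP, Prod.fst_add,
    Prod.snd_add]

lemma window_subset_of_mem_tilQ (hfst : ∀ t, (γ t).1 = t) (hy : y ∈ tilQ γ x0 y0 L A1) :
    {t | y.1 + t ∈ Icc (leftBottomP γ x0 y0 L A1).1 (rightTopP γ x0 y0 L A1).1} ⊆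
      Icc (L * (10 * A1 - 1)) (L * (10 * A1 + 4)) := by
  obtain ⟨x, ⟨⟨hx₁, hx₂⟩, -⟩, s, ⟨hs₁, hs₂⟩, rfl⟩ := hy
  rintro t ⟨ht₁, ht₂⟩
  simp only [leftBottomP, rightTopP, vshift, Prod.fst_add, hfst] at ht₁ ht₂
  exact ⟨by linarith, by linarith⟩

lemma slopesIn_of_mem_tilQ (hγ : γ = gAdj ∨ γ = gOpp) (hL : 0 < L) (hA : 2 ≤ A1)
    (hy : y ∈ tilQ γ x0 y0 L A1) :
    SlopesIn (fun t => (γ t).2)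
      {t | y.1 + t ∈ Icc (leftBottomP γ x0 y0 L A1).1 (rightTopP γ x0 y0 L A1).1}
      (L * A1) (24 * (L * A1)) :=
  (slopesIn_curve hγ (by nlinarith) _).mono (window_subset_of_mem_tilQ (curve_fst hγ) hy)
    (by nlinarith) (by nlinarith)

end Curves

section Estimates

variable {γ : ℝ → ℝ × ℝ} {x0 y0 L A1 r δ b : ℝ} {y z : ℝ × ℝ}

lemma reach_cornerSize (hL : 0 < L) (hA : 0 < A1) (hδ : 0 ≤ δ) :
    reach (24 * (L * A1)) (cornerSize L A1 δ) = 1 / 24 * δ * L / A1 := by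
  have hheight : δ * L ^ 2 / (24 * (L * A1)) = 1 / 24 * δ * L / A1 := by field_simp
  have hwidth : 1 / 24 * δ * L / A1 ≤ 2 * δ * L / A1 := by
    gcongr
    norm_num
  rw [reach, cornerSize, hheight, min_eq_right hwidth]

lemma cornerSize_fst_add_snd_div (hL : L ≠ 0) (A δ : ℝ) :
    (cornerSize L A δ).1 + (cornerSize L A δ).2 / (L * A) = 3 * δ * L / A := by
  simp only [cornerSize]
  field_simp
  ring

lemma cornerSize_add_self_le (hL : 0 ≤ L) (hA : 2 ≤ A1) (hδ : δ ≤ 1 / 2) :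
    cornerSize L A1 δ + cornerSize L A1 δ ≤ (L, L ^ 2) := by
  have hA₀ : 0 < A1 := by linarith
  constructor
  · simp only [cornerSize, Prod.fst_add, ← add_div]
    rw [div_le_iff₀ hA₀]
    nlinarith
  · simp only [cornerSize, Prod.snd_add]
    nlinarith [sq_nonneg L]

lemma two_rpow_neg_le_half (hr : 1 ≤ r) : (2 : ℝ) ^ (-r) ≤ 1 / 2 :=
  calc (2 : ℝ) ^ (-r) ≤ (2 : ℝ) ^ (-1 : ℝ) :=
        Real.rpow_le_rpow_of_exponent_le one_le_two (neg_le_neg hr)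
    _ = 1 / 2 := by rw [Real.rpow_neg_one, one_div]

lemma le_volume_of_hasRoom (hγ : γ = gAdj ∨ γ = gOpp) (hL : 0 < L) (hA : 2 ≤ A1) (hδ : 0 ≤ δ)
    (hz : z ∈ setP γ x0 y0 L A1) (hy : y ∈ phiM γ z (tilQ γ x0 y0 L A1))
    (hroom : HasRoom (leftBottomP γ x0 y0 L A1) (rightTopP γ x0 y0 L A1) (cornerSize L A1 δ) z) :
    ENNReal.ofReal (1 / 24 * δ * L / A1) ≤ volume (IsetP γ y (setP γ x0 y0 L A1)) := by
  have hA₀ : 0 < A1 := by linarith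
  have hLA : 0 < L * A1 := mul_pos hL hA₀
  rw [setP_eq_Icc] at hz ⊢
  rw [← reach_cornerSize hL hA₀ hδ]
  exact (ENNReal.ofReal_le_ofReal (reach_le_reach_add_reach (by positivity) hz hroom)).trans
    (ofReal_reach_add_reach_le_volume_IsetP (curve_fst hγ) (slopesIn_of_mem_tilQ hγ hL hA hy.1)
      hLA.le (by positivity) hz hy)

lemma volume_le_of_reach_add_reach_le (hγ : γ = gAdj ∨ γ = gOpp) (hL : 0 < L) (hA : 2 ≤ A1)
    (hz : z ∈ setP γ x0 y0 L A1) (hy : y ∈ phiM γ z (tilQ γ x0 y0 L A1))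
    (hb : reach (L * A1) (z - leftBottomP γ x0 y0 L A1) +
      reach (L * A1) (rightTopP γ x0 y0 L A1 - z) ≤ b) :
    volume (IsetP γ y (setP γ x0 y0 L A1)) ≤ ENNReal.ofReal b := by
  rw [setP_eq_Icc] at hz ⊢
  exact (volume_IsetP_le_ofReal_reach_add_reach (curve_fst hγ)
    (slopesIn_of_mem_tilQ hγ hL hA hy.1) (mul_pos hL (by linarith)) hz hy).trans
    (ENNReal.ofReal_le_ofReal hb)

lemma hasRoom_of_mem_Pcore (hz : z ∈ Pcore γ x0 y0 L A1) :
    HasRoom (leftBottomP γ x0 y0 L A1) (rightTopP γ x0 y0 L A1) (cornerSize L A1 (1 / 2)) z := by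
  refine hasRoom_of_notMem_boxes ?_ ?_
  · rw [← Prod.snd_sub, rightTopP_sub_leftBottomP, cornerSize]
    ring
  · rwa [Pcore, setP_eq_Icc, Plt_eq_leftTopBox, Prb_eq_rightBottomBox, Real.rpow_neg_one,
      ← one_div] at hz

lemma DeltaLt_union_DeltaRb_subset (hL : 0 ≤ L) (hA : 2 ≤ A1) (hr : 1 ≤ r) :
    DeltaLt γ x0 y0 L A1 r ∪ DeltaRb γ x0 y0 L A1 r ⊆
      {z ∈ Plt γ x0 y0 L A1 r ∪ Prb γ x0 y0 L A1 r |
        HasRoom (leftBottomP γ x0 y0 L A1) (rightTopP γ x0 y0 L A1)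
          (cornerSize L A1 ((2 : ℝ) ^ (-r))) z} := by
  have hh := cornerSize_add_self_le hL hA (two_rpow_neg_le_half hr)
  rw [← rightTopP_sub_leftBottomP γ x0 y0 L A1] at hh
  rw [DeltaLt, DeltaRb, setP_eq_Icc, Plt_eq_leftTopBox, Prb_eq_rightBottomBox]
  rintro z (hz | hz)
  · exact (closure_frontier_leftTopBox_diff_subset hh hz).imp_left .inl
  · exact (closure_frontier_rightBottomBox_diff_subset hh hz).imp_left .inr

lemma Plt_union_Prb_subset_setP (hL : 0 ≤ L) (hA : 2 ≤ A1) (hr : 1 ≤ r) :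
    Plt γ x0 y0 L A1 r ∪ Prb γ x0 y0 L A1 r ⊆ setP γ x0 y0 L A1 := by
  have hh := cornerSize_add_self_le hL hA (two_rpow_neg_le_half hr)
  rw [← rightTopP_sub_leftBottomP γ x0 y0 L A1] at hh
  rw [setP_eq_Icc, Plt_eq_leftTopBox, Prb_eq_rightBottomBox]
  exact union_subset (leftTopBox_subset_Icc hh) (rightBottomBox_subset_Icc hh)

lemma volume_le_of_mem_setP (hγ : γ = gAdj ∨ γ = gOpp) (hL : 0 < L) (hA : 2 ≤ A1)
    (hz : z ∈ setP γ x0 y0 L A1) (hy : y ∈ phiM γ z (tilQ γ x0 y0 L A1)) :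
    volume (IsetP γ y (setP γ x0 y0 L A1)) ≤ ENNReal.ofReal (L / A1) := by
  refine volume_le_of_reach_add_reach_le hγ hL hA hz hy
    (reach_add_reach_le_height_div.trans_eq ?_)
  rw [← Prod.snd_sub, rightTopP_sub_leftBottomP, sq, mul_div_mul_left _ _ hL.ne']

lemma volume_le_of_mem_Plt_union_Prb (hγ : γ = gAdj ∨ γ = gOpp) (hL : 0 < L) (hA : 2 ≤ A1)
    (hr : 1 ≤ r) (hz : z ∈ Plt γ x0 y0 L A1 r ∪ Prb γ x0 y0 L A1 r)
    (hy : y ∈ phiM γ z (tilQ γ x0 y0 L A1)) :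
    volume (IsetP γ y (setP γ x0 y0 L A1)) ≤
      ENNReal.ofReal (3 * (2 : ℝ) ^ (-r) * L / A1) := by
  have hLA : 0 ≤ L * A1 := mul_nonneg hL.le (by linarith)
  have hzP := Plt_union_Prb_subset_setP hL.le hA hr hz
  rw [Plt_eq_leftTopBox, Prb_eq_rightBottomBox] at hz
  exact volume_le_of_reach_add_reach_le hγ hL hA hzP hy
    ((reach_add_reach_le_of_mem_boxes hLA hz).trans_eq (cornerSize_fst_add_snd_div hL.ne' _ _))

end Estimates

/-- **Fibre lengths of the return segments into `P`.** For `γ ∈ {γ_adj, γ_opp}`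
there are `0 < c < C` and `A* ≥ 1` such that for all `A₁ ≥ A*` and every
`(1,2)`-cube `Q`: (a) for `z ∈ P^c` and `y ∈ φ(z,−,W₁)`,
`m(I(y,+,P)) ∼ ℓ(I)/A₁`; and (b) for `r ≥ 1`, `z ∈ Δ_r^{lt} ∪ Δ_r^{rb}` and
`y ∈ φ(z,−,W₁)`, `m(I(y,+,P)) ∼ 2^{-r}·ℓ(I)/A₁`. -/
theorem return_fibre_lengths (γ : ℝ → ℝ × ℝ) (hγ : γ = gAdj ∨ γ = gOpp) :
    ∃ c C Astar : ℝ, 0 < c ∧ c < C ∧ 1 ≤ Astar ∧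
      ∀ A1 : ℝ, Astar ≤ A1 → ∀ x0 y0 L : ℝ, 0 < L →
        (∀ z ∈ Pcore γ x0 y0 L A1, ∀ y ∈ phiM γ z (setW1 γ x0 y0 L A1),
          ENNReal.ofReal (c * L / A1) ≤
              volume (IsetP γ y (setP γ x0 y0 L A1)) ∧
            volume (IsetP γ y (setP γ x0 y0 L A1)) ≤ ENNReal.ofReal (C * L / A1)) ∧
        ∀ r : ℝ, 1 ≤ r →
          ∀ z ∈ DeltaLt γ x0 y0 L A1 r ∪ DeltaRb γ x0 y0 L A1 r,
            ∀ y ∈ phiM γ z (setW1 γ x0 y0 L A1),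
              ENNReal.ofReal (c * (2:ℝ) ^ (-r) * L / A1) ≤
                  volume (IsetP γ y (setP γ x0 y0 L A1)) ∧
                volume (IsetP γ y (setP γ x0 y0 L A1)) ≤
                  ENNReal.ofReal (C * (2:ℝ) ^ (-r) * L / A1) := by
  refine ⟨1 / 48, 3, 2, by norm_num, by norm_num, by norm_num, fun A1 hA x0 y0 L hL => ?_⟩
  have hQ {z y} (hy : y ∈ phiM γ z (setW1 γ x0 y0 L A1)) : y ∈ phiM γ z (tilQ γ x0 y0 L A1) :=
    ⟨hy.1.1, hy.2⟩
  refine ⟨fun z hz y hy => ⟨?_, ?_⟩, fun r hr z hz y hy => ?_⟩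
  · rw [show (1 / 48 : ℝ) = 1 / 24 * (1 / 2) by norm_num]
    exact le_volume_of_hasRoom hγ hL hA (by norm_num) hz.1 (hQ hy) (hasRoom_of_mem_Pcore hz)
  · refine (volume_le_of_mem_setP hγ hL hA hz.1 (hQ hy)).trans (ENNReal.ofReal_le_ofReal ?_)
    gcongr
    linarith
  · obtain ⟨hzbox, hroom⟩ := DeltaLt_union_DeltaRb_subset hL.le hA hr hz
    refine ⟨le_trans (ENNReal.ofReal_le_ofReal ?_) (le_volume_of_hasRoom hγ hL hA (by positivity)
      (Plt_union_Prb_subset_setP hL.le hA hr hzbox) (hQ hy) hroom),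
      volume_le_of_mem_Plt_union_Prb hγ hL hA hr hzbox (hQ hy)⟩
    gcongr
    norm_num

end
end

section
/- Let n≥1, α>0, δ>0 and K≥0. Let f:ℝ^n→ℂ be measurable and satisfy |f(x)−f(y)|≤K·|x−y|^α whenever |x−y|≤√n·δ. Let η∈C_c^∞(ℝ^n) with η≥0, supp η⊂B(0,δ/2) and ∫η=1, and set h=f*η (convolution). Then ‖f−h‖_{BMO^{1,α}} ≤ C·K, where C depends only on n and α. -/
/-!
The mollification error `f - η ⋆ f` is `2 K`-Hölder at *all* scales. Averaging against `η` preserves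
the Hölder condition of `f` at scales `≤ r`, so pairs of points at distance `≤ r` are no problem.
Since `η` averages over a ball of radius `r`, the error is at most `K r ^ α` at every point, which
handles pairs at distance `> r`. Finally, the oscillation of a globally Hölder function over a cube
of side `l` is controlled by the diameter `√n l` of the cube.
-/

open MeasureTheory

noncomputable section

/-- An ordinary axis-parallel cube in `ℝⁿ`, with centre `c` and sidelength `l > 0`. -/
structure Cube (n : ℕ) where
  c : EuclideanSpace ℝ (Fin n)
  l : ℝ
  l_pos : 0 < l

/-- The underlying set of a cube. -/
def Cube.set {n : ℕ} (Q : Cube n) : Set (EuclideanSpace ℝ (Fin n)) :=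
  {x | ∀ i, |x i - Q.c i| ≤ Q.l / 2}

/-- The fractional mean oscillation
`O^{1,α}(b;Q) = |Q|^{-α/n} (1/|Q|) ∫_Q |b - ⟨b⟩_Q|`, with `|Q| = ℓ(Q)^n`. -/
def osc1 {n : ℕ} (α : ℝ) (b : EuclideanSpace ℝ (Fin n) → ℂ) (Q : Cube n) : ℝ :=
  ((Q.l ^ n) : ℝ) ^ (-(α / n)) * ⨍ x in Q.set, ‖b x - ⨍ y in Q.set, b y‖

open Function Metric ContinuousLinearMap
open scoped NNReal Convolution

section HolderAtScale

variable {X Y : Type*} [PseudoMetricSpace X] [PseudoMetricSpace Y]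

/-- `f` is `K`-Hölder of exponent `α` at scales `≤ r`: the Hölder inequality is only required for
pairs of points at distance at most `r`, while `HolderWith` requires it for all pairs. -/
def HolderAtScale (K α : ℝ≥0) (r : ℝ) (f : X → Y) : Prop :=
  ∀ x y, dist x y ≤ r → dist (f x) (f y) ≤ K * dist x y ^ (α : ℝ)

lemma holderWith_of_dist_le {K α : ℝ≥0} {f : X → Y}
    (hf : ∀ x y, dist (f x) (f y) ≤ K * dist x y ^ (α : ℝ)) : HolderWith K α f := by
  intro x y
  rw [edist_nndist, edist_nndist, ← ENNReal.coe_rpow_of_nonneg _ α.coe_nonneg]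
  exact_mod_cast hf x y

lemma HolderAtScale.dist_le_of_mem_ball {K α : ℝ≥0} {r : ℝ} {f : X → Y}
    (hf : HolderAtScale K α r f) {x y : X} (hy : y ∈ ball x r) :
    dist (f y) (f x) ≤ K * r ^ (α : ℝ) := by
  have hyx : dist y x ≤ r := (mem_ball.mp hy).le
  refine (hf y x hyx).trans ?_
  gcongr

end HolderAtScale

namespace HolderAtScale

variable {G E : Type*} [SeminormedAddCommGroup G] [NormedAddCommGroup E]
  [NormedSpace ℝ E] [MeasurableSpace G] [BorelSpace G] [SecondCountableTopology G]
  {μ : Measure G} [SFinite μ] [μ.IsAddLeftInvariant] {K α : ℝ≥0} {r : ℝ} {f : G → E} {η : G → ℝ}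

lemma convolutionExistsAt (hf : HolderAtScale K α r f) (hfm : AEStronglyMeasurable f μ)
    (hη : Integrable η μ) (hηr : support η ⊆ ball 0 r) (x : G) :
    ConvolutionExistsAt η f x (lsmul ℝ ℝ) μ := by
  refine BddAbove.convolutionExistsAt _ ?_ measurableSet_ball
    ((support_smul_subset_left η _).trans hηr) hη.integrableOn hfm
  refine ⟨‖f x‖ + K * r ^ (α : ℝ), ?_⟩
  rintro _ ⟨y, hy, rfl⟩
  refine norm_le_norm_add_const_of_dist_le (hf.dist_le_of_mem_ball ?_)
  rwa [mem_ball_iff_norm', ← mem_ball_zero_iff]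

variable [CompleteSpace E]

lemma convolution (hf : HolderAtScale K α r f) (hfm : AEStronglyMeasurable f μ)
    (hη0 : ∀ x, 0 ≤ η x) (hηr : support η ⊆ ball 0 r) (hη1 : ∫ x, η x ∂μ = 1) :
    HolderAtScale K α r (η ⋆[lsmul ℝ ℝ, μ] f) := by
  intro x y hxy
  have hexists := hf.convolutionExistsAt hfm (integrable_of_integral_eq_one hη1) hηr
  have htranslate : (η ⋆[lsmul ℝ ℝ, μ] f) x - (η ⋆[lsmul ℝ ℝ, μ] f) y =
      (η ⋆[lsmul ℝ ℝ, μ] fun w => f (x - y + w) - f w) y := by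
    simp only [convolution_lsmul, smul_sub, sub_add_sub_cancel]
    exact (integral_sub (hexists x) (hexists y)).symm
  have hmeas : AEStronglyMeasurable (fun w => f (x - y + w) - f w) μ :=
    (hfm.comp_measurePreserving (measurePreserving_add_left μ (x - y))).sub hfm
  rw [dist_eq_norm, htranslate, ← dist_zero_right]
  refine dist_convolution_le (by positivity) hηr hη0 hη1 hmeas fun w _ => ?_
  have hdist : dist (x - y + w) w = dist x y := by rw [dist_add_self_left, dist_eq_norm]
  simpa only [dist_zero_right, ← dist_eq_norm, hdist] using hf (x - y + w) w (hdist.trans_le hxy)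

lemma dist_convolution_self_le (hf : HolderAtScale K α r f) (hfm : AEStronglyMeasurable f μ)
    (hη0 : ∀ x, 0 ≤ η x) (hηr : support η ⊆ ball 0 r) (hη1 : ∫ x, η x ∂μ = 1)
    (hr : 0 ≤ r) (x : G) :
    dist ((η ⋆[lsmul ℝ ℝ, μ] f) x) (f x) ≤ K * r ^ (α : ℝ) :=
  dist_convolution_le (by positivity) hηr hη0 hη1 hfm fun _ hy => hf.dist_le_of_mem_ball hy

theorem holderWith_sub_convolution (hf : HolderAtScale K α r f) (hfm : AEStronglyMeasurable f μ)
    (hη0 : ∀ x, 0 ≤ η x) (hηr : support η ⊆ ball 0 r) (hη1 : ∫ x, η x ∂μ = 1) (hr : 0 ≤ r) :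
    HolderWith (2 * K) α (f - η ⋆[lsmul ℝ ℝ, μ] f) := by
  refine holderWith_of_dist_le fun x y => ?_
  set h := η ⋆[lsmul ℝ ℝ, μ] f
  rw [Pi.sub_apply, Pi.sub_apply, NNReal.coe_mul, NNReal.coe_ofNat, mul_assoc, two_mul]
  rcases le_total (dist x y) r with hxy | hxy
  · exact (dist_sub_sub_le _ _ _ _).trans
      (add_le_add (hf x y hxy) (hf.convolution hfm hη0 hηr hη1 x y hxy))
  · have herror (z : G) : ‖f z - h z‖ ≤ K * dist x y ^ (α : ℝ) := by
      rw [← dist_eq_norm, dist_comm]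
      refine (hf.dist_convolution_self_le hfm hη0 hηr hη1 hr z).trans ?_
      gcongr
    exact (dist_le_norm_add_norm _ _).trans (add_le_add (herror x) (herror y))

end HolderAtScale

section Average

variable {X E : Type*} [MeasurableSpace X] {μ : Measure X} [NormedAddCommGroup E] {g : X → E}
  {s : Set X} {B : ℝ}

lemma integrableOn_of_dist_le (hs : MeasurableSet s) (hμs : μ s ≠ ⊤)
    (hgm : AEStronglyMeasurable g (μ.restrict s)) (hg : ∀ x ∈ s, ∀ y ∈ s, dist (g x) (g y) ≤ B) :
    IntegrableOn g s μ := by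
  rcases s.eq_empty_or_nonempty with rfl | ⟨x₀, hx₀⟩
  · exact integrableOn_empty
  · exact .of_bound hμs.lt_top hgm (‖g x₀‖ + B) <| ae_restrict_of_forall_mem hs fun x hx =>
      norm_le_norm_add_const_of_dist_le (hg x hx x₀ hx₀)

variable [NormedSpace ℝ E] [CompleteSpace E]

lemma setAverage_norm_sub_setAverage_le (hs : MeasurableSet s) (hμs0 : μ s ≠ 0) (hμs : μ s ≠ ⊤)
    (hgm : AEStronglyMeasurable g (μ.restrict s)) (hg : ∀ x ∈ s, ∀ y ∈ s, dist (g x) (g y) ≤ B) :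
    ⨍ x in s, ‖g x - ⨍ y in s, g y ∂μ‖ ∂μ ≤ B := by
  have hint : IntegrableOn g s μ := integrableOn_of_dist_le hs hμs hgm hg
  have hdev (x : X) (hx : x ∈ s) : ‖g x - ⨍ y in s, g y ∂μ‖ ≤ B := by
    rw [← dist_eq_norm, dist_comm]
    exact (convex_closedBall (g x) B).set_average_mem isClosed_closedBall hμs0 hμs
      (ae_restrict_of_forall_mem hs fun y hy => hg y hy x hx) hint
  exact (convex_Iic B).set_average_mem isClosed_Iic hμs0 hμs (ae_restrict_of_forall_mem hs hdev)
    (hint.sub (integrableOn_const hμs)).norm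

end Average

section Cube

variable {n : ℕ}

lemma Cube.set_eq_preimage_closedBall (Q : Cube n) :
    Q.set = WithLp.ofLp ⁻¹' closedBall (WithLp.ofLp Q.c) (Q.l / 2) := by
  ext x
  simp only [Cube.set, Set.mem_ofPred_eq, Set.mem_preimage, mem_closedBall,
    dist_pi_le_iff (half_pos Q.l_pos).le, Real.dist_eq]

lemma Cube.measurableSet (Q : Cube n) : MeasurableSet Q.set := by
  rw [Q.set_eq_preimage_closedBall]
  exact measurableSet_closedBall.preimage (by fun_prop)

lemma Cube.volume_set (Q : Cube n) : volume Q.set = ENNReal.ofReal (Q.l ^ n) := by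
  rw [Q.set_eq_preimage_closedBall,
    (PiLp.volume_preserving_ofLp (Fin n)).measure_preimage
      measurableSet_closedBall.nullMeasurableSet,
    Real.volume_pi_closedBall _ (half_pos Q.l_pos).le, Fintype.card_fin,
    mul_div_cancel₀ _ two_ne_zero]

lemma Cube.dist_le (Q : Cube n) {x y : EuclideanSpace ℝ (Fin n)} (hx : x ∈ Q.set)
    (hy : y ∈ Q.set) : dist x y ≤ √n * Q.l := by
  rw [Q.set_eq_preimage_closedBall] at hx hy
  calc dist x y ≤ √n * dist (WithLp.ofLp x) (WithLp.ofLp y) := by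
        simpa [Real.sqrt_eq_rpow] using
          (PiLp.antilipschitzWith_ofLp 2 fun _ : Fin n => ℝ).le_mul_dist x y
    _ ≤ √n * Q.l := by
        gcongr
        linarith [dist_triangle_right (WithLp.ofLp x) (WithLp.ofLp y) (WithLp.ofLp Q.c),
          mem_closedBall.mp hx, mem_closedBall.mp hy]

lemma osc1_le_of_holderWith (hn : n ≠ 0) {C α : ℝ≥0} {g : EuclideanSpace ℝ (Fin n) → ℂ}
    (hg : HolderWith C α g) (hgm : AEStronglyMeasurable g) (Q : Cube n) :
    osc1 α g Q ≤ C * √n ^ (α : ℝ) := by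
  have hl := Q.l_pos
  have hpow : (Q.l ^ n) ^ (-(α / n : ℝ)) = (Q.l ^ (α : ℝ))⁻¹ := by
    rw [← Real.rpow_natCast_mul hl.le, mul_neg, mul_div_cancel₀ _ (Nat.cast_ne_zero.mpr hn),
      Real.rpow_neg hl.le]
  have hmean : ⨍ x in Q.set, ‖g x - ⨍ y in Q.set, g y‖ ≤ C * (√n * Q.l) ^ (α : ℝ) :=
    setAverage_norm_sub_setAverage_le Q.measurableSet (by simp [Q.volume_set, hl])
      (by simp [Q.volume_set]) hgm.restrict fun x hx y hy => hg.dist_le_of_le (Q.dist_le hx hy)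
  calc osc1 α g Q ≤ (Q.l ^ (α : ℝ))⁻¹ * (C * (√n * Q.l) ^ (α : ℝ)) := by
        rw [osc1, hpow]
        gcongr
    _ = C * √n ^ (α : ℝ) := by
        rw [Real.mul_rpow (Real.sqrt_nonneg _) hl.le]
        field_simp

end Cube

theorem mollification_bmo_approx_general {n : ℕ} (hn : 1 ≤ n) {α K r : ℝ} (hα : 0 ≤ α)
    (hK : 0 ≤ K) (hr : 0 ≤ r) {f : EuclideanSpace ℝ (Fin n) → ℂ} (hf : Measurable f)
    (hfK : ∀ x y, ‖x - y‖ ≤ r → ‖f x - f y‖ ≤ K * ‖x - y‖ ^ α)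
    {η : EuclideanSpace ℝ (Fin n) → ℝ} (hη0 : ∀ x, 0 ≤ η x)
    (hηr : support η ⊆ ball 0 r) (hη1 : ∫ x, η x = 1) (Q : Cube n) :
    osc1 α (fun x => f x - ∫ y, (η y : ℂ) * f (x - y)) Q ≤ 2 * √n ^ α * K := by
  lift α to ℝ≥0 using hα
  lift K to ℝ≥0 using hK
  have hfr : HolderAtScale K α r f := by simpa only [HolderAtScale, dist_eq_norm] using hfK
  have hfm : AEStronglyMeasurable f := hf.aestronglyMeasurable
  have hη : AEStronglyMeasurable η := (integrable_of_integral_eq_one hη1).aestronglyMeasurable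
  have hhm : AEStronglyMeasurable (η ⋆[lsmul ℝ ℝ] f) :=
    (hη.convolution_integrand (lsmul ℝ ℝ) hfm).integral_prod_right'
  calc osc1 α (f - η ⋆[lsmul ℝ ℝ] f) Q ≤ (2 * K : ℝ≥0) * √n ^ (α : ℝ) :=
        osc1_le_of_holderWith (Nat.one_le_iff_ne_zero.mp hn)
          (hfr.holderWith_sub_convolution hfm hη0 hηr hη1 hr)
          (hfm.sub hhm) Q
    _ = 2 * √n ^ (α : ℝ) * K := by push_cast; ring

/-- **BMO-approximation by mollification of functions Hölder at small scales.**
If `f` is `K`-Hölder of exponent `α` at scales `≤ √n·δ` and `η` is a nonnegative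
smooth bump supported in `B(0, δ/2)` with `∫ η = 1`, then the mollification
`h = f * η` satisfies `‖f − h‖_{BMO^{1,α}} ≤ C·K`, where `C` depends only on `n`
and `α`. -/
theorem mollification_bmo_approx (n : ℕ) (hn : 1 ≤ n) (α : ℝ) (hα : 0 < α) :
    ∃ C : ℝ, 0 < C ∧
      ∀ δ K : ℝ, 0 < δ → 0 ≤ K →
      ∀ f : EuclideanSpace ℝ (Fin n) → ℂ, Measurable f →
        (∀ x y : EuclideanSpace ℝ (Fin n), ‖x - y‖ ≤ Real.sqrt n * δ →
          ‖f x - f y‖ ≤ K * ‖x - y‖ ^ α) →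
      ∀ η : EuclideanSpace ℝ (Fin n) → ℝ, ContDiff ℝ (⊤ : ℕ∞) η → HasCompactSupport η →
        (∀ x, 0 ≤ η x) → Function.support η ⊆ Metric.ball 0 (δ / 2) →
        (∫ x, η x) = 1 →
        ∀ Q : Cube n,
          osc1 α (fun x => f x - ∫ y, (η y : ℂ) * f (x - y)) Q ≤ C * K := by
  have hsqrt : 1 ≤ √n := Real.one_le_sqrt.mpr (Nat.one_le_cast.mpr hn)
  refine ⟨2 * √n ^ α, mul_pos two_pos (Real.rpow_pos_of_pos (by linarith) α),
    fun δ K hδ hK f hf hfK η _ _ hη0 hηδ hη1 => ?_⟩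
  exact mollification_bmo_approx_general hn hα.le hK (by positivity) hf hfK hη0
    (hηδ.trans (ball_subset_ball (by nlinarith))) hη1

end
end
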